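/- Let K ≥ 2 be an integer and A,B integers with (A,B) not both ≡ 0 mod K, and let μ ∈ ℂ with Im μ > 0. For every γ ∈ ℂ such that θ_{[00]}(γ;μ) ≠ 0, θ_{[AB]}(0;μ) ≠ 0 and θ_{[−A,−B]}(0;μ) ≠ 0, the following identity holds: w_{AB}(γ;μ)·w_{−A,−B}(γ;μ) = (∂²_γθ_{[AB]})(0;μ)/θ_{[AB]}(0;μ) − ((∂_γθ_{[AB]})(0;μ)/θ_{[AB]}(0;μ))² − ρ'(γ;μ), where ρ'(γ;μ) = ∂_γρ(γ;μ). (The constant on the right-hand side equals 2πi·Z_{AB}(0;μ), the value at 0 of the holomorphic extension of Z_{AB}.) -/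

import Mathlib

open Complex Filter

/-- Theta function with characteristics `p, q`. -/
noncomputable def Theta (p q : ℝ) (γ μ : ℂ) : ℂ :=
  ∑' m : ℤ, Complex.exp ((Real.pi : ℂ) * Complex.I * μ * ((m : ℂ) + (p : ℂ))^2
    + 2 * (Real.pi : ℂ) * Complex.I * ((m : ℂ) + (p : ℂ)) * (γ + (q : ℂ)))

/-- The Jacobi theta function `θ₁`. -/
noncomputable def theta1 (γ μ : ℂ) : ℂ := -Theta (1/2) (1/2) γ μ

/-- Logarithmic derivative of `θ₁` in the first argument. -/
noncomputable def rho (γ μ : ℂ) : ℂ := deriv (fun z => theta1 z μ) γ / theta1 γ μ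

/-- `θ_{[AB]}`, theta with characteristics `A/K - 1/2`, `1/2 - B/K`. -/
noncomputable def thetaAB (K : ℕ) (A B : ℤ) (γ μ : ℂ) : ℂ :=
  Theta ((A : ℝ)/(K : ℝ) - 1/2) (1/2 - (B : ℝ)/(K : ℝ)) γ μ

/-- The coefficients `w_{AB}` of the elliptic r-matrix. -/
noncomputable def wAB (K : ℕ) (A B : ℤ) (γ μ : ℂ) : ℂ :=
  thetaAB K A B γ μ * deriv (fun z => thetaAB K 0 0 z μ) 0
    / (thetaAB K A B 0 μ * thetaAB K 0 0 γ μ)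

/-- The functions `Z_{AB}`. -/
noncomputable def ZAB (K : ℕ) (A B : ℤ) (γ μ : ℂ) : ℂ :=
  wAB K A B γ μ / (2 * (Real.pi : ℂ) * Complex.I) *
    (deriv (fun z => thetaAB K A B z μ) γ / thetaAB K A B γ μ
      - deriv (fun z => thetaAB K A B z μ) 0 / thetaAB K A B 0 μ)

/-- `ε = exp(2πi/K)`. -/
noncomputable def epsK (K : ℕ) : ℂ := Complex.exp (2 * (Real.pi : ℂ) * Complex.I / (K : ℂ))

/-- The diagonal matrix `F = diag(1, ε, …, ε^{K-1})`. -/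
noncomputable def Fmat (K : ℕ) : Matrix (Fin K) (Fin K) ℂ :=
  Matrix.diagonal (fun i => epsK K ^ (i : ℕ))

/-- The cyclic permutation matrix `H`. -/
def Hmat (K : ℕ) : Matrix (Fin K) (Fin K) ℂ :=
  Matrix.of fun i j => if (j : ℕ) = ((i : ℕ) + 1) % K then 1 else 0

/-- `σ_{AB} = H^A F^B` (indices taken mod `K`, using `H^K = F^K = 1`). -/
noncomputable def sigmaAB (K : ℕ) (A B : ℤ) : Matrix (Fin K) (Fin K) ℂ :=
  Hmat K ^ ((A % (K : ℤ)).toNat) * Fmat K ^ ((B % (K : ℤ)).toNat)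

/-- The dual basis `σ^{AB} = (ε^{-AB}/K)·σ_{-A,-B}`. -/
noncomputable def sigmaDualAB (K : ℕ) (A B : ℤ) : Matrix (Fin K) (Fin K) ℂ :=
  (epsK K ^ (-(A * B)) / (K : ℂ)) • sigmaAB K (-A) (-B)

open Kronecker in
/-- The elliptic r-matrix. -/
noncomputable def rmat (K : ℕ) (γ μ : ℂ) : Matrix (Fin K × Fin K) (Fin K × Fin K) ℂ :=
  ∑ A ∈ Finset.range K, ∑ B ∈ Finset.range K,
    if A = 0 ∧ B = 0 then 0
    else wAB K A B γ μ • (sigmaAB K A B ⊗ₖ sigmaDualAB K A B)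


/-- Shift of the characteristics. -/
lemma theta_shift (a b : ℝ) (z μ : ℂ) :
    Theta (a - 1/2) (1/2 - b) z μ =
      Complex.exp ((Real.pi : ℂ) * I * μ * a ^ 2 + 2 * Real.pi * I * a * (1/2 - b))
        * Complex.exp (2 * Real.pi * I * a * z) * Theta (-1/2) (1/2) (z + (a * μ - b)) μ := by
  unfold Theta
  rw [← tsum_mul_left]
  congr 1
  ext m
  rw [← Complex.exp_add, ← Complex.exp_add]
  congr 1
  push_cast
  ring

lemma theta_half (z μ : ℂ) : Theta (1/2) (1/2) z μ = Theta (-1/2) (1/2) z μ := by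
  unfold Theta
  symm
  rw [← (Equiv.addRight (1 : ℤ)).tsum_eq]
  congr 1
  ext m
  congr 1
  simp only [Equiv.coe_addRight]
  push_cast
  ring

lemma theta_eq_jacobi (p q : ℝ) (z μ : ℂ) :
    Theta p q z μ = Complex.exp ((Real.pi : ℂ) * I * μ * p ^ 2 + 2 * Real.pi * I * p * (z + q))
      * jacobiTheta₂ (z + q + p * μ) μ := by
  unfold Theta jacobiTheta₂ jacobiTheta₂_term
  rw [← tsum_mul_left]
  congr 1
  ext m
  rw [← Complex.exp_add]
  congr 1
  ring

lemma summable_gauss (s t μ : ℂ) (hμ : 0 < μ.im) (c : ℂ) :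
    Summable (fun m : ℤ => Complex.exp ((Real.pi : ℂ) * I * μ * ((m : ℂ) + s) ^ 2
      + 2 * Real.pi * I * ((m : ℂ) + s) * t + c)) := by
  have h := ((summable_jacobiTheta₂_term_iff (t + s * μ) μ).2 hμ).mul_left
    (Complex.exp ((Real.pi : ℂ) * I * μ * s ^ 2 + 2 * Real.pi * I * s * t + c))
  refine h.congr fun m => ?_
  unfold jacobiTheta₂_term
  rw [← Complex.exp_add]
  congr 1
  ring

lemma differentiable_theta (p q : ℝ) (μ : ℂ) (hμ : 0 < μ.im) :
    Differentiable ℂ (fun z => Theta p q z μ) := by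
  have : (fun z => Theta p q z μ) = fun z =>
      Complex.exp ((Real.pi : ℂ) * I * μ * p ^ 2 + 2 * Real.pi * I * p * (z + q))
      * jacobiTheta₂ (z + q + p * μ) μ := funext fun z => theta_eq_jacobi p q z μ
  rw [this]
  intro z
  refine DifferentiableAt.mul (by fun_prop) ?_
  exact (differentiableAt_jacobiTheta₂_fst (z + q + p * μ) hμ).comp
    (f := fun z : ℂ => z + q + p * μ) z (by fun_prop)

/-- Even part. -/
noncomputable def thE (μ z : ℂ) : ℂ := Theta 0 0 (2 * z) (2 * μ)

/-- Odd part. -/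
noncomputable def thO (μ z : ℂ) : ℂ := Theta (1/2) 0 (2 * z) (2 * μ)

/-- Parity splitting of pairs of integers. -/
def parMap : (ℤ × ℤ) ⊕ (ℤ × ℤ) → ℤ × ℤ
  | Sum.inl (i, j) => (i + j + 1, i - j)
  | Sum.inr (i, j) => (i + j + 1, i - j + 1)

lemma parMap_bij : Function.Bijective parMap := by
  constructor
  · rintro (⟨i, j⟩ | ⟨i, j⟩) (⟨k, l⟩ | ⟨k, l⟩) h <;>
      simp only [parMap, Prod.mk.injEq] at h <;> obtain ⟨h1, h2⟩ := h
    · congr 2 <;> omega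
    · omega
    · omega
    · congr 2 <;> omega
  · rintro ⟨m, n⟩
    rcases Int.even_or_odd' (m + n) with ⟨k, hk | hk⟩
    · refine ⟨Sum.inr (k - 1, m - k), ?_⟩
      simp only [parMap, Prod.mk.injEq]; omega
    · refine ⟨Sum.inl (k, m - k - 1), ?_⟩
      simp only [parMap, Prod.mk.injEq]; omega

lemma hasSum_prod_aux (f g : ℤ → ℂ) (hf : Summable f) (hg : Summable g) :
    HasSum (fun x : ℤ × ℤ => f x.1 * g x.2) ((∑' m, f m) * ∑' m, g m) :=
  hf.hasSum.mul hg.hasSum (summable_mul_of_summable_norm hf.norm hg.norm)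

lemma hs_congr {f g : ℤ × ℤ → ℂ} {a : ℂ} (h : HasSum f a) (e : ∀ x, g x = f x) :
    HasSum g a := by
  rwa [funext e]

lemma theta_add (μ z u : ℂ) (hμ : 0 < μ.im) :
    Theta (-1/2) (1/2) (z + u) μ * Theta (-1/2) (1/2) (z - u) μ
      = thE μ z * thO μ u - thO μ z * thE μ u := by
  have hμ2 : 0 < (2 * μ).im := by simpa using hμ
  have key : ∀ (p q : ℝ) (t ν : ℂ), 0 < ν.im → Summable (fun m : ℤ =>
      Complex.exp ((Real.pi : ℂ) * Complex.I * ν * ((m : ℂ) + (p : ℂ))^2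
    + 2 * (Real.pi : ℂ) * Complex.I * ((m : ℂ) + (p : ℂ)) * (t + (q : ℂ)))) := by
    intro p q t ν hν
    simpa using summable_gauss p (t + q) ν hν 0
  have prod : ∀ (p q : ℝ) (t ν : ℂ) (p' q' : ℝ) (t' ν' : ℂ), 0 < ν.im → 0 < ν'.im →
      HasSum (fun x : ℤ × ℤ =>
      Complex.exp ((Real.pi : ℂ) * Complex.I * ν * ((x.1 : ℂ) + (p : ℂ))^2
    + 2 * (Real.pi : ℂ) * Complex.I * ((x.1 : ℂ) + (p : ℂ)) * (t + (q : ℂ))) *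
      Complex.exp ((Real.pi : ℂ) * Complex.I * ν' * ((x.2 : ℂ) + (p' : ℂ))^2
    + 2 * (Real.pi : ℂ) * Complex.I * ((x.2 : ℂ) + (p' : ℂ)) * (t' + (q' : ℂ))))
      (Theta p q t ν * Theta p' q' t' ν') := by
    intro p q t ν p' q' t' ν' h h'
    have s1 := key p q t ν h
    have s2 := key p' q' t' ν' h'
    exact hasSum_prod_aux _ _ s1 s2
  have H := prod (-1/2) (1/2) (z + u) μ (-1/2) (1/2) (z - u) μ hμ hμ
  have H1 := prod 0 0 (2 * z) (2 * μ) (1/2) 0 (2 * u) (2 * μ) hμ2 hμ2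
  have H2 := (prod (1/2) 0 (2 * z) (2 * μ) 0 0 (2 * u) (2 * μ) hμ2 hμ2).neg
  have e1 : ∀ k : ℤ, Complex.exp (2 * Real.pi * I * k) = 1 := by
    intro k
    rw [Complex.exp_eq_one_iff]
    exact ⟨k, by ring⟩
  have e2 : Complex.exp (Real.pi * I) = -1 := Complex.exp_pi_mul_I
  have H' := (Equiv.ofBijective parMap parMap_bij).hasSum_iff.2 H
  refine H'.unique ?_
  unfold thE thO
  rw [sub_eq_add_neg (Theta 0 0 (2 * z) (2 * μ) * _)]
  apply HasSum.sum (M := ℂ)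
  · refine hs_congr H1 ?_
    rintro ⟨i, j⟩
    simp only [Function.comp, Equiv.ofBijective_apply, parMap]
    rw [← Complex.exp_add, ← Complex.exp_add]
    refine Eq.trans ?_ (mul_one _)
    rw [← e1 i, ← Complex.exp_add]
    congr 1
    push_cast
    ring
  · refine hs_congr H2 ?_
    rintro ⟨i, j⟩
    simp only [Function.comp, Equiv.ofBijective_apply, parMap]
    rw [← Complex.exp_add, ← Complex.exp_add]
    refine Eq.trans ?_ (mul_neg_one _)
    refine Eq.trans ?_ (mul_one _)
    rw [← e2, ← e1 i, ← Complex.exp_add, ← Complex.exp_add]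
    congr 1
    push_cast
    ring

/-- The algebraic core: a rank two antisymmetric kernel. -/
lemma core (f a b : ℂ → ℂ) (hf : Differentiable ℂ f) (ha : Differentiable ℂ a)
    (hb : Differentiable ℂ b) (h : ∀ z u, f (z + u) * f (z - u) = a z * b u - b z * a u)
    (z u : ℂ) :
    f (z + u) * f (z - u) * deriv f 0 ^ 2 =
      f u ^ 2 * (deriv (deriv f) z * f z - deriv f z ^ 2)
      - f z ^ 2 * (deriv (deriv f) u * f u - deriv f u ^ 2) := by
  have hf' : Differentiable ℂ (deriv f) := hf.deriv
  have ha' : Differentiable ℂ (deriv a) := ha.deriv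
  have hb' : Differentiable ℂ (deriv b) := hb.deriv
  have d1 : ∀ z u, deriv f (z + u) * f (z - u) - f (z + u) * deriv f (z - u)
      = a z * deriv b u - b z * deriv a u := by
    intro z u
    have p1 : HasDerivAt (fun u => f (z + u)) (deriv f (z + u)) u :=
      (hf (z + u)).hasDerivAt.comp_const_add z u
    have p2 : HasDerivAt (fun u => f (z - u)) (-deriv f (z - u)) u :=
      (hf (z - u)).hasDerivAt.comp_const_sub z u
    have p3 := p1.mul p2
    have p4 := ((hb u).hasDerivAt.const_mul (a z)).sub ((ha u).hasDerivAt.const_mul (b z))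
    have : ((fun u => f (z + u)) * fun u => f (z - u)) =
      ((fun u => a z * b u) - fun u => b z * a u) := funext fun u => h z u
    rw [this] at p3
    have := p3.unique p4
    linear_combination this
  have d2 : ∀ z, 2 * (deriv (deriv f) z * f z - deriv f z ^ 2)
      = a z * deriv (deriv b) 0 - b z * deriv (deriv a) 0 := by
    intro z
    have p1 : HasDerivAt (fun u => f (z + u)) (deriv f (z + 0)) 0 :=
      (hf (z + 0)).hasDerivAt.comp_const_add z 0
    have p2 : HasDerivAt (fun u => f (z - u)) (-deriv f (z - 0)) 0 :=
      (hf (z - 0)).hasDerivAt.comp_const_sub z 0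
    have q1 : HasDerivAt (fun u => deriv f (z + u)) (deriv (deriv f) (z + 0)) 0 :=
      (hf' (z + 0)).hasDerivAt.comp_const_add z 0
    have q2 : HasDerivAt (fun u => deriv f (z - u)) (-deriv (deriv f) (z - 0)) 0 :=
      (hf' (z - 0)).hasDerivAt.comp_const_sub z 0
    have p3 := (q1.mul p2).sub (p1.mul q2)
    have p4 := ((hb' 0).hasDerivAt.const_mul (a z)).sub ((ha' 0).hasDerivAt.const_mul (b z))
    have : (((fun u => deriv f (z + u)) * fun u => f (z - u)) -
        ((fun u => f (z + u)) * fun u => deriv f (z - u))) =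
      ((fun u => a z * deriv b u) - fun u => b z * deriv a u) := funext fun u => d1 z u
    rw [this] at p3
    have := p3.unique p4
    simp only [add_zero, sub_zero] at this
    linear_combination this
  have sq : ∀ z, f z ^ 2 = a z * b 0 - b z * a 0 := by
    intro z
    have := h z 0
    simp only [add_zero, sub_zero] at this
    linear_combination this
  have f0 : f 0 = 0 := by
    have := sq 0
    have h0 : f 0 ^ 2 = 0 := by linear_combination this
    exact pow_eq_zero_iff (two_ne_zero) |>.1 h0
  have d20 := d2 0
  rw [f0] at d20
  rw [h z u, sq z, sq u]
  linear_combination (-(1/2) * (a z * b u - b z * a u)) * d20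
    - (1/2) * (a u * b 0 - b u * a 0) * d2 z + (1/2) * (a z * b 0 - b z * a 0) * d2 u

/-- the identity
`w_{AB}(γ)·w_{−A,−B}(γ) = θ''_{AB}(0)/θ_{AB}(0) − (θ'_{AB}(0)/θ_{AB}(0))² − ρ'(γ)`,
the right-hand side constant being `2πi·Z_{AB}(0)`. -/
theorem wAB_product_identity (K : ℕ) (hK : 2 ≤ K) (A B : ℤ)
    (hAB : ¬(A % (K : ℤ) = 0 ∧ B % (K : ℤ) = 0)) (μ γ : ℂ) (hμ : 0 < μ.im)
    (h1 : thetaAB K 0 0 γ μ ≠ 0) (h2 : thetaAB K A B 0 μ ≠ 0)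
    (h3 : thetaAB K (-A) (-B) 0 μ ≠ 0) :
    wAB K A B γ μ * wAB K (-A) (-B) γ μ
      = deriv (deriv (fun z => thetaAB K A B z μ)) 0 / thetaAB K A B 0 μ
          - (deriv (fun z => thetaAB K A B z μ) 0 / thetaAB K A B 0 μ)^2
          - deriv (fun z => rho z μ) γ := by
  set f : ℂ → ℂ := fun z => Theta (-1/2) (1/2) z μ with hfdef
  have hf : Differentiable ℂ f := differentiable_theta _ _ μ hμ
  have hf' : Differentiable ℂ (deriv f) := hf.deriv
  have hμ2 : 0 < (2 * μ).im := by simpa using hμ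
  have hE : Differentiable ℂ (thE μ) :=
    (differentiable_theta 0 0 (2 * μ) hμ2).comp (g := fun z => Theta 0 0 z (2 * μ))
      (f := fun z : ℂ => 2 * z) (by fun_prop)
  have hO : Differentiable ℂ (thO μ) :=
    (differentiable_theta (1/2) 0 (2 * μ) hμ2).comp (g := fun z => Theta (1/2) 0 z (2 * μ))
      (f := fun z : ℂ => 2 * z) (by fun_prop)
  have hcore := core f (thE μ) (thO μ) hf hE hO (fun z u => theta_add μ z u hμ)
  obtain ⟨k, u, c, c', hc, hc', hg, hg'⟩ : ∃ k u c c' : ℂ, c ≠ 0 ∧ c' ≠ 0 ∧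
      (∀ z, thetaAB K A B z μ = c * Complex.exp (k * z) * f (z + u)) ∧
      (∀ z, thetaAB K (-A) (-B) z μ = c' * Complex.exp (-(k * z)) * f (z - u)) := by
    refine ⟨2 * Real.pi * I * ((A / K : ℝ) : ℂ), ((A / K : ℝ) : ℂ) * μ - ((B / K : ℝ) : ℂ),
      Complex.exp ((Real.pi : ℂ) * I * μ * ((A / K : ℝ) : ℂ) ^ 2
        + 2 * Real.pi * I * ((A / K : ℝ) : ℂ) * (1/2 - ((B / K : ℝ) : ℂ))),
      Complex.exp ((Real.pi : ℂ) * I * μ * (((-A : ℤ) / K : ℝ) : ℂ) ^ 2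
        + 2 * Real.pi * I * (((-A : ℤ) / K : ℝ) : ℂ) * (1/2 - (((-B : ℤ) / K : ℝ) : ℂ))),
      Complex.exp_ne_zero _, Complex.exp_ne_zero _, fun z => ?_, fun z => ?_⟩
    · exact theta_shift (A / K) (B / K) z μ
    · have := theta_shift ((-A : ℤ) / K) ((-B : ℤ) / K) z μ
      unfold thetaAB
      rw [this]
      congr 1
      · congr 2
        push_cast
        ring
      · simp only [hfdef]
        congr 1
        push_cast
        ring
  have h00 : ∀ z, thetaAB K 0 0 z μ = f z := by
    intro z
    simp only [thetaAB, hfdef]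
    congr 1 <;> norm_num
  have h00' : (fun z => thetaAB K 0 0 z μ) = f := funext h00
  have hrho : (fun z => rho z μ) = fun z => deriv f z / f z := by
    have ht : (fun z => theta1 z μ) = fun z => -f z := by
      funext z
      simp only [theta1, hfdef, theta_half]
    funext z
    have hz : theta1 z μ = -f z := congrFun ht z
    simp only [rho, ht, hz, deriv.fun_neg, neg_div_neg_eq]
  have hgfun : (fun z => thetaAB K A B z μ) = fun z => c * Complex.exp (k * z) * f (z + u) :=
    funext hg
  have hexp : ∀ z, HasDerivAt (fun z => c * Complex.exp (k * z)) (c * (Complex.exp (k * z) * k)) z := by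
    intro z
    have : HasDerivAt (fun z => k * z) k z := by simpa using (hasDerivAt_id z).const_mul k
    exact this.cexp.const_mul c
  have hd1 : ∀ z, deriv (fun z => thetaAB K A B z μ) z =
      c * Complex.exp (k * z) * (k * f (z + u) + deriv f (z + u)) := by
    intro z
    rw [hgfun]
    have := (hexp z).fun_mul ((hf (z + u)).hasDerivAt.comp_add_const z u)
    rw [this.deriv]
    ring
  have hd2 : deriv (deriv (fun z => thetaAB K A B z μ)) 0 =
      c * (k ^ 2 * f u + 2 * k * deriv f u + deriv (deriv f) u) := by
    rw [funext hd1]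
    have := (hexp 0).fun_mul ((((hf (0 + u)).hasDerivAt.comp_add_const 0 u).const_mul k).fun_add
      ((hf' (0 + u)).hasDerivAt.comp_add_const 0 u))
    rw [this.deriv]
    simp
    ring
  have hr : deriv (fun z => rho z μ) γ =
      (deriv (deriv f) γ * f γ - deriv f γ * deriv f γ) / f γ ^ 2 := by
    rw [hrho]
    rw [h00] at h1
    exact ((hf' γ).hasDerivAt.fun_div (hf γ).hasDerivAt h1).deriv
  have fsq : ∀ w, f w * f (-w) = - f w ^ 2 := by
    intro w
    have e1 := theta_add μ 0 w hμ
    have e2 := theta_add μ w 0 hμ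
    simp only [zero_add, zero_sub, add_zero, sub_zero] at e1 e2
    simp only [hfdef]
    linear_combination e1 + e2
  rw [h00] at h1
  have hfu : f u ≠ 0 := by
    intro h
    apply h2
    rw [hg]; simp [h]
  have hfnu : f (-u) = - f u := by
    apply mul_left_cancel₀ hfu
    linear_combination fsq u
  have hC := hcore γ u
  have hE0 := Complex.exp_ne_zero (k * γ)
  rw [hr, hd2, hd1 0]
  unfold wAB
  rw [h00', h00, hg, hg, hg', hg', Complex.exp_neg]
  simp only [mul_zero, Complex.exp_zero, zero_add, zero_sub, hfnu, neg_zero, mul_one]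
  field_simp
  linear_combination -hC
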